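/- Let κ be a (P,ρ)-kernel on a locally finite weakly ranked poset (P,ρ), and let F and G be the right and left augmented Chow functions. Then: (i) for every s ≤ t, the coefficient of x^{ρ_{st}} in F_{st}(x), in G_{st}(x), and in κ_{st}(x) all coincide; in particular if κ is non-degenerate (deg κ_{st} = ρ_{st} for all s ≤ t) then deg F_{st} = deg G_{st} = ρ_{st} for every s ≤ t; (ii) F^rev = F and G^rev = G, i.e. F_{st}(x) = x^{ρ_{st}} F_{st}(1/x) and G_{st}(x) = x^{ρ_{st}} G_{st}(1/x) for every s ≤ t. -/

import Mathlib

/-!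
Everything takes place in the incidence algebra `I(P)` over `ℤ[x]`, where `rev` is multiplicative on
elements of degree at most `ρ`, because `ρ` is additive.

Evaluating `κ^rev κ = δ` at `x = 1` shows that `κ(1)` is a unipotent element over `ℤ` whose square
is `δ`; hence `κ(1) = δ`, so `x - 1` divides `κ_{st}` for `s < t` and
`κ = x δ + (x - 1) κ̄`. Reflecting this identity gives `x κ^rev = δ - (x - 1) κ̄^rev`, and cancelling
`x - 1` yields `κ̄^rev = κ^rev κ̄ = κ̄ κ^rev`. Passing to inverses, `ℋ^rev = ℋ κ = κ ℋ`.

Symmetry is now immediate: `F^rev = ℋ^rev f = ℋ κ f = ℋ f^rev = F`, and dually for `G`.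

For the top coefficient, symmetry reduces the claim to constant terms. Since `f^rev_{wt}` has zero
constant term for `w < t`, the constant term of `F_{st}` is that of `ℋ_{st}`. From
`ℋ κ = x ℋ - (x - 1) δ` one gets `ℋ = x ℋ κ^rev - (x - 1) κ^rev`, so `ℋ` and `κ^rev` have the same
constant terms, and that of `κ^rev_{st}` is the coefficient of `x^{ρ_{st}}` in `κ_{st}`.
-/

open Finset Polynomial
open scoped Classical

noncomputable section

variable {α : Type*}

/-- Convolution product in the incidence algebra of a locally finite poset over `ℤ[x]`.
Only the values on intervals `s ≤ t` are relevant. -/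
def conv [PartialOrder α] [LocallyFiniteOrder α] (a b : α → α → Polynomial ℤ) :
    α → α → Polynomial ℤ :=
  fun s t => ∑ w ∈ Finset.Icc s t, a s w * b w t

/-- The identity `δ` of the incidence algebra. -/
def dlt [PartialOrder α] : α → α → Polynomial ℤ :=
  fun s t => if s = t then 1 else 0

/-- The involution `a ↦ a^rev`, given by `(a^rev)_{st}(x) = x^{ρ_{st}} a_{st}(1/x)`. -/
def rev (ρ : α → α → ℕ) (a : α → α → Polynomial ℤ) : α → α → Polynomial ℤ :=
  fun s t => (a s t).reflect (ρ s t)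

/-- A weak rank function on a poset. -/
structure IsWeakRank [Preorder α] (ρ : α → α → ℕ) : Prop where
  pos : ∀ ⦃s t : α⦄, s < t → 0 < ρ s t
  add : ∀ ⦃s w t : α⦄, s ≤ w → w ≤ t → ρ s t = ρ s w + ρ w t

/-- `κ` is a `(P,ρ)`-kernel: it lies in `I_ρ(P)`, is `1` on the diagonal, and `κ⁻¹ = κ^rev`. -/
structure IsKernel [PartialOrder α] [LocallyFiniteOrder α] (ρ : α → α → ℕ)
    (κ : α → α → Polynomial ℤ) : Prop where
  degLE : ∀ ⦃s t : α⦄, s ≤ t → (κ s t).natDegree ≤ ρ s t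
  diag : ∀ s : α, κ s s = 1
  left : ∀ ⦃s t : α⦄, s ≤ t → conv (rev ρ κ) κ s t = dlt s t
  right : ∀ ⦃s t : α⦄, s ≤ t → conv κ (rev ρ κ) s t = dlt s t

/-- The reduced kernel `κ̄`: `κ̄_{st} = κ_{st}/(x-1)` for `s < t` and `κ̄_{ss} = -1`. -/
def red [PartialOrder α] (κ : α → α → Polynomial ℤ) : α → α → Polynomial ℤ :=
  fun s t => if s = t then -1 else κ s t /ₘ (X - 1)

/-- `H` is the Chow function of `κ`, i.e. `H = -(κ̄)⁻¹`. -/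
structure IsChow [PartialOrder α] [LocallyFiniteOrder α] (κ H : α → α → Polynomial ℤ) : Prop where
  left : ∀ ⦃s t : α⦄, s ≤ t → conv (red κ) H s t = -dlt s t
  right : ∀ ⦃s t : α⦄, s ≤ t → conv H (red κ) s t = -dlt s t

/-- `f` is the right KLS function of the kernel `κ`. -/
structure IsRightKLS [PartialOrder α] [LocallyFiniteOrder α] (ρ : α → α → ℕ)
    (κ f : α → α → Polynomial ℤ) : Prop where
  diag : ∀ s : α, f s s = 1
  degLT : ∀ ⦃s t : α⦄, s < t → 2 * (f s t).natDegree < ρ s t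
  rev_eq : ∀ ⦃s t : α⦄, s ≤ t → rev ρ f s t = conv κ f s t

/-- `g` is the left KLS function of the kernel `κ`. -/
structure IsLeftKLS [PartialOrder α] [LocallyFiniteOrder α] (ρ : α → α → ℕ)
    (κ g : α → α → Polynomial ℤ) : Prop where
  diag : ∀ s : α, g s s = 1
  degLT : ∀ ⦃s t : α⦄, s < t → 2 * (g s t).natDegree < ρ s t
  rev_eq : ∀ ⦃s t : α⦄, s ≤ t → rev ρ g s t = conv g κ s t

/-- `p` is symmetric with center of symmetry `d/2`, i.e. `p(x) = x^d p(1/x)`. -/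
def PolySymm (d : ℕ) (p : Polynomial ℤ) : Prop := p.natDegree ≤ d ∧ p.reflect d = p

/-- All coefficients of `p` are non-negative. -/
def PolyNonneg (p : Polynomial ℤ) : Prop := ∀ n, 0 ≤ p.coeff n

/-- The coefficient sequence of `p` is unimodal. -/
def PolyUnimodal (p : Polynomial ℤ) : Prop :=
  ∃ j, (∀ i < j, p.coeff i ≤ p.coeff (i + 1)) ∧ ∀ i, j ≤ i → p.coeff (i + 1) ≤ p.coeff i

end

section AugmentedChow

variable {α : Type*}

/-! ### Reflection and the incidence algebra -/

lemma reflect_finset_sum {ι : Type*} (N : ℕ) (S : Finset ι) (p : ι → ℤ[X]) :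
    reflect N (∑ i ∈ S, p i) = ∑ i ∈ S, reflect N (p i) := by
  ext n
  simp

lemma eval_one_reflect (N : ℕ) (p : ℤ[X]) (h : p.natDegree ≤ N) :
    (reflect N p).eval 1 = p.eval 1 := by
  let _ : Invertible (1 : ℤ) := invertibleOne
  have := eval₂_reflect_mul_pow (RingHom.id ℤ) 1 N p h
  simpa [eval₂_id] using this

/-- The coefficients of `x^d` and `x^0` agree in `p(x) = x^d p(1/x)`. -/
lemma PolySymm.coeff_eq {d : ℕ} {p : ℤ[X]} (h : PolySymm d p) : p.coeff d = p.coeff 0 := by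
  conv_rhs => rw [← h.2]
  simp

lemma natDegree_rev_le {ρ : α → α → ℕ} {a : α → α → ℤ[X]} {s t : α}
    (h : (a s t).natDegree ≤ ρ s t) : (rev ρ a s t).natDegree ≤ ρ s t :=
  (natDegree_reflect_le).trans (max_le le_rfl h)

lemma rev_coeff_zero (ρ : α → α → ℕ) (a : α → α → ℤ[X]) (s t : α) :
    (rev ρ a s t).coeff 0 = (a s t).coeff (ρ s t) := by
  simp [rev]

lemma rev_rev (ρ : α → α → ℕ) (a : α → α → ℤ[X]) : rev ρ (rev ρ a) = a := by
  funext s t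
  simp [rev]

variable [PartialOrder α]

/-- The element of Mathlib's incidence algebra with the values of `a` on the intervals `s ≤ t`;
the values of `a` on other pairs are discarded. -/
noncomputable def toInc (a : α → α → ℤ[X]) : IncidenceAlgebra ℤ[X] α :=
  ⟨fun s t => if s ≤ t then a s t else 0, fun _ _ h => if_neg h⟩

lemma toInc_apply (a : α → α → ℤ[X]) {s t : α} (h : s ≤ t) : toInc a s t = a s t :=
  if_pos h

lemma toInc_congr {a b : α → α → ℤ[X]} (h : ∀ ⦃s t : α⦄, s ≤ t → a s t = b s t) :
    toInc a = toInc b := by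
  ext s t hst
  rw [toInc_apply a hst, toInc_apply b hst, h hst]

lemma apply_eq_of_toInc_eq {a b : α → α → ℤ[X]} (h : toInc a = toInc b) {s t : α} (hst : s ≤ t) :
    a s t = b s t := by
  rw [← toInc_apply a hst, h, toInc_apply b hst]

lemma IsWeakRank.self {ρ : α → α → ℕ} (hρ : IsWeakRank ρ) (s : α) : ρ s s = 0 := by
  have := hρ.add (le_refl s) (le_refl s)
  omega

lemma toInc_dlt : toInc (dlt : α → α → ℤ[X]) = 1 := by
  ext s t hst
  rw [toInc_apply _ hst]
  rfl

lemma toInc_neg_dlt : toInc (fun s t : α => -dlt s t) = -1 := by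
  ext s t hst
  rw [toInc_apply _ hst]
  rfl

/-- `δ^rev = δ`, up to the sign under which it occurs in the definition of `ℋ`. -/
lemma rev_neg_dlt {ρ : α → α → ℕ} (hρ : IsWeakRank ρ) (s t : α) :
    rev ρ (fun s t : α => -dlt s t) s t = -dlt s t := by
  by_cases h : s = t
  · subst h
    simp [rev, dlt, hρ.self]
  · simp [rev, dlt, h]

lemma coeff_zero_rev_of_lt {ρ : α → α → ℕ} {f : α → α → ℤ[X]}
    (hf : ∀ ⦃s t : α⦄, s < t → 2 * (f s t).natDegree < ρ s t) {s t : α} (hst : s < t) :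
    (rev ρ f s t).coeff 0 = 0 := by
  rw [rev_coeff_zero]
  exact coeff_eq_zero_of_natDegree_lt (by have := hf hst; omega)

-- The next five lemmas restate general facts for the negation and subtraction carried by
-- `IncidenceAlgebra`, whose instances do not unify with those of its ring structure when rewriting.
lemma inc_neg_neg (a : IncidenceAlgebra ℤ[X] α) : - -a = a := neg_neg a

lemma inc_smul_neg (p : ℤ[X]) (a : IncidenceAlgebra ℤ[X] α) : p • -a = -(p • a) := smul_neg p a

lemma inc_sub_eq (a b : IncidenceAlgebra ℤ[X] α) : a - b = a + -b := sub_eq_add_neg a b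

variable [LocallyFiniteOrder α]

lemma inc_neg_mul (a b : IncidenceAlgebra ℤ[X] α) : -a * b = -(a * b) := neg_mul a b

lemma inc_mul_neg (a b : IncidenceAlgebra ℤ[X] α) : a * -b = -(a * b) := mul_neg a b

lemma toInc_conv (a b : α → α → ℤ[X]) : toInc (conv a b) = toInc a * toInc b := by
  ext1 s t hst
  rw [toInc_apply _ hst, IncidenceAlgebra.mul_apply]
  refine Finset.sum_congr rfl fun w hw => ?_
  rw [Finset.mem_Icc] at hw
  rw [toInc_apply a hw.1, toInc_apply b hw.2]

variable {ρ : α → α → ℕ}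

/-- `I_ρ(P)` is closed under convolution. -/
lemma natDegree_conv_le (hρ : IsWeakRank ρ) {a b : α → α → ℤ[X]}
    (ha : ∀ ⦃s t : α⦄, s ≤ t → (a s t).natDegree ≤ ρ s t)
    (hb : ∀ ⦃s t : α⦄, s ≤ t → (b s t).natDegree ≤ ρ s t) (s t : α) :
    (conv a b s t).natDegree ≤ ρ s t := by
  refine natDegree_sum_le_of_forall_le _ _ fun w hw => ?_
  rw [Finset.mem_Icc] at hw
  rw [hρ.add hw.1 hw.2]
  exact natDegree_mul_le.trans (add_le_add (ha hw.1) (hb hw.2))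

/-- `rev` is multiplicative on `I_ρ(P)`. -/
lemma toInc_rev_conv (hρ : IsWeakRank ρ) {a b : α → α → ℤ[X]}
    (ha : ∀ ⦃s t : α⦄, s ≤ t → (a s t).natDegree ≤ ρ s t)
    (hb : ∀ ⦃s t : α⦄, s ≤ t → (b s t).natDegree ≤ ρ s t) :
    toInc (rev ρ (conv a b)) = toInc (rev ρ a) * toInc (rev ρ b) := by
  rw [← toInc_conv]
  refine toInc_congr fun s t hst => ?_
  simp only [rev, conv, reflect_finset_sum]
  refine Finset.sum_congr rfl fun w hw => ?_
  rw [Finset.mem_Icc] at hw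
  rw [hρ.add hw.1 hw.2, reflect_mul _ _ (ha hw.1) (hb hw.2)]

variable {κ H : α → α → ℤ[X]}

/-! ### The reduced kernel and the Chow function -/

/-- A unipotent involution over `ℤ` is trivial: in `Σ_w κ_{sw}(1) κ_{wt}(1) = 0` the inner terms
vanish by induction, which leaves `2 κ_{st}(1) = 0`. -/
lemma kernel_eval_one (hρ : IsWeakRank ρ) (hκ : IsKernel ρ κ) :
    ∀ (n : ℕ) (s t : α), ρ s t = n → s < t → (κ s t).eval 1 = 0 := by
  intro n
  induction n using Nat.strong_induction_on with
  | _ n ih =>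
    intro s t hn hst
    have h := congrArg (eval 1) (hκ.left hst.le)
    simp only [conv, dlt, hst.ne, if_false, eval_finsetSum, eval_mul, eval_zero] at h
    rw [← Finset.add_sum_Ioc_eq_sum_Icc hst.le, Finset.sum_eq_single_of_mem t
      (Finset.mem_Ioc.2 ⟨hst, le_rfl⟩)] at h
    · simp only [rev] at h
      rw [eval_one_reflect _ _ (hκ.degLE le_rfl), eval_one_reflect _ _ (hκ.degLE hst.le),
        hκ.diag, hκ.diag] at h
      simp only [eval_one] at h
      omega
    · intro w hw hwt
      rw [Finset.mem_Ioc] at hw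
      have hwt' : w < t := lt_of_le_of_ne hw.2 hwt
      have h1 := hρ.add hw.1.le hw.2
      have h2 := hρ.pos hw.1
      rw [ih (ρ w t) (by omega) w t rfl hwt', mul_zero]

lemma red_mul (hρ : IsWeakRank ρ) (hκ : IsKernel ρ κ) {s t : α} (hst : s < t) :
    (X - 1) * red κ s t = κ s t := by
  have h : (κ s t).IsRoot 1 := kernel_eval_one hρ hκ _ s t rfl hst
  rw [red, if_neg hst.ne]
  simpa using mul_divByMonic_eq_iff_isRoot.2 h

lemma natDegree_red_lt (hρ : IsWeakRank ρ) (hκ : IsKernel ρ κ) {s t : α} (hst : s < t) :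
    (red κ s t).natDegree < ρ s t := by
  rw [red, if_neg hst.ne]
  have h1 : (X - 1 : ℤ[X]).natDegree = 1 := by simpa using natDegree_X_sub_C (1 : ℤ)
  have hm : (X - 1 : ℤ[X]).Monic := by simpa using monic_X_sub_C (1 : ℤ)
  have := natDegree_divByMonic (κ s t) hm
  have := hκ.degLE hst.le
  have := hρ.pos hst
  omega

lemma natDegree_red_le (hρ : IsWeakRank ρ) (hκ : IsKernel ρ κ) ⦃s t : α⦄ (hst : s ≤ t) :
    (red κ s t).natDegree ≤ ρ s t := by
  rcases hst.eq_or_lt with rfl | h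
  · simp [red]
  · exact (natDegree_red_lt hρ hκ h).le

lemma kernel_eq (hρ : IsWeakRank ρ) (hκ : IsKernel ρ κ) :
    toInc κ = (X : ℤ[X]) • 1 + (X - 1 : ℤ[X]) • toInc (red κ) := by
  ext1 s t hst
  rw [IncidenceAlgebra.add_apply, IncidenceAlgebra.constSMul_apply,
    IncidenceAlgebra.constSMul_apply, toInc_apply _ hst, toInc_apply _ hst,
    IncidenceAlgebra.one_apply, smul_eq_mul, smul_eq_mul]
  rcases hst.eq_or_lt with rfl | h
  · simp [red, hκ.diag]
  · rw [if_neg h.ne, red_mul hρ hκ h]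
    simp

/-- The reflection of `κ = x δ + (x - 1) κ̄`. -/
lemma rev_kernel_eq (hρ : IsWeakRank ρ) (hκ : IsKernel ρ κ) :
    (X : ℤ[X]) • toInc (rev ρ κ) = 1 - (X - 1 : ℤ[X]) • toInc (rev ρ (red κ)) := by
  ext1 s t hst
  rw [IncidenceAlgebra.sub_apply, IncidenceAlgebra.constSMul_apply,
    IncidenceAlgebra.constSMul_apply, toInc_apply _ hst, toInc_apply _ hst,
    IncidenceAlgebra.one_apply, smul_eq_mul, smul_eq_mul]
  rcases hst.eq_or_lt with rfl | h
  · simp [rev, red, hκ.diag, hρ.self]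
  · rw [if_neg h.ne]
    have hd := natDegree_red_lt hρ hκ h
    obtain ⟨m, hm⟩ : ∃ m, ρ s t = 1 + m := ⟨ρ s t - 1, by omega⟩
    have hdm : (red κ s t).natDegree ≤ m := by omega
    have h1 : (X - 1 : ℤ[X]).natDegree ≤ 1 := by simpa using natDegree_X_sub_C_le (1 : ℤ)
    have e1 : reflect (1 + m) (κ s t) = (1 - X) * reflect m (red κ s t) := by
      rw [← red_mul hρ hκ h, reflect_mul _ _ h1 hdm]
      simp
    have e2 : reflect (1 + m) (red κ s t) = X * reflect m (red κ s t) := by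
      have := reflect_mul (1 : ℤ[X]) (red κ s t) (F := 1) (by simp) hdm
      simpa using this
    simp only [rev, hm, e1, e2]
    ring

lemma natDegree_chow_le (hρ : IsWeakRank ρ) (hκ : IsKernel ρ κ) (hH : IsChow κ H) :
    ∀ (n : ℕ) (s t : α), ρ s t = n → s ≤ t → (H s t).natDegree ≤ ρ s t := by
  intro n
  induction n using Nat.strong_induction_on with
  | _ n ih =>
    intro s t hn hst
    have h := hH.left hst
    rw [conv, ← Finset.add_sum_Ioc_eq_sum_Icc hst] at h
    have hss : red κ s s = -1 := by simp [red]
    rw [hss] at h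
    have hrec : H s t = dlt s t + ∑ w ∈ Finset.Ioc s t, red κ s w * H w t := by
      linear_combination -h
    rw [hrec]
    refine (natDegree_add_le _ _).trans (max_le ?_ ?_)
    · unfold dlt
      split_ifs <;> simp
    · refine natDegree_sum_le_of_forall_le _ _ fun w hw => ?_
      rw [Finset.mem_Ioc] at hw
      have h1 := hρ.add hw.1.le hw.2
      have h2 := hρ.pos hw.1
      have h3 := ih (ρ w t) (by omega) w t rfl hw.2
      have h4 := natDegree_red_lt hρ hκ hw.1
      have h5 := natDegree_mul_le (p := red κ s w) (q := H w t)
      omega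

lemma smul_X_sub_one_cancel {a b : IncidenceAlgebra ℤ[X] α}
    (h : (X - 1 : ℤ[X]) • a = (X - 1 : ℤ[X]) • b) : a = b := by
  ext1 s t _
  have h' := congrArg (fun c : IncidenceAlgebra ℤ[X] α => c s t) h
  simp only [IncidenceAlgebra.constSMul_apply, smul_eq_mul] at h'
  have hne : (X - 1 : ℤ[X]) ≠ 0 := by simpa using X_sub_C_ne_zero (1 : ℤ)
  exact mul_left_cancel₀ hne h'

lemma toInc_kernel_inv (hκ : IsKernel ρ κ) :
    toInc (rev ρ κ) * toInc κ = 1 ∧ toInc κ * toInc (rev ρ κ) = 1 := by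
  rw [← toInc_conv, ← toInc_conv, ← toInc_dlt]
  exact ⟨toInc_congr hκ.left, toInc_congr hκ.right⟩

lemma toInc_chow_inv (hH : IsChow κ H) :
    toInc (red κ) * toInc H = -1 ∧ toInc H * toInc (red κ) = -1 := by
  rw [← toInc_conv, ← toInc_conv, ← toInc_neg_dlt]
  exact ⟨toInc_congr hH.left, toInc_congr hH.right⟩

lemma toInc_rev_chow_inv (hρ : IsWeakRank ρ) (hκ : IsKernel ρ κ) (hH : IsChow κ H) :
    toInc (rev ρ (red κ)) * toInc (rev ρ H) = -1 ∧
      toInc (rev ρ H) * toInc (rev ρ (red κ)) = -1 := by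
  have hHd : ∀ ⦃s t : α⦄, s ≤ t → (H s t).natDegree ≤ ρ s t :=
    fun s t hst => natDegree_chow_le hρ hκ hH _ s t rfl hst
  rw [← toInc_rev_conv hρ (natDegree_red_le hρ hκ) hHd,
    ← toInc_rev_conv hρ hHd (natDegree_red_le hρ hκ), ← toInc_neg_dlt]
  constructor
  · refine toInc_congr fun s t hst => ?_
    rw [← rev_neg_dlt hρ, rev, hH.left hst, rev]
  · refine toInc_congr fun s t hst => ?_
    rw [← rev_neg_dlt hρ, rev, hH.right hst, rev]

/-- `ℋ^rev = ℋ κ = κ ℋ`. -/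
lemma rev_chow_eq (hρ : IsWeakRank ρ) (hκ : IsKernel ρ κ) (hH : IsChow κ H) :
    toInc (rev ρ H) = toInc H * toInc κ ∧ toInc (rev ρ H) = toInc κ * toInc H := by
  obtain ⟨hk1, hk2⟩ := toInc_kernel_inv hκ
  obtain ⟨hh1, hh2⟩ := toInc_chow_inv hH
  obtain ⟨hr1, hr2⟩ := toInc_rev_chow_inv hρ hκ hH
  have hK := kernel_eq hρ hκ
  have hKr := rev_kernel_eq hρ hκ
  have hB : (X - 1 : ℤ[X]) • toInc (red κ) = toInc κ - (X : ℤ[X]) • 1 := by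
    rw [hK]; abel
  have hBr : (X - 1 : ℤ[X]) • toInc (rev ρ (red κ)) = 1 - (X : ℤ[X]) • toInc (rev ρ κ) := by
    rw [hKr]; abel
  have e1 : toInc (rev ρ (red κ)) = toInc (rev ρ κ) * toInc (red κ) := by
    apply smul_X_sub_one_cancel
    rw [← mul_smul_comm, hB, hBr, mul_sub, hk1, mul_smul_comm, mul_one]
  have e2 : toInc (rev ρ (red κ)) = toInc (red κ) * toInc (rev ρ κ) := by
    apply smul_X_sub_one_cancel
    rw [← smul_mul_assoc, hB, hBr, sub_mul, hk2, smul_mul_assoc, one_mul]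
  constructor
  -- `ℋ^rev κ^rev κ̄ = -δ = ℋ κ̄`, and `κ̄`, `κ^rev` are invertible.
  · rw [e1] at hr2
    have : toInc (rev ρ H) * toInc (rev ρ κ) = toInc H := by
      calc toInc (rev ρ H) * toInc (rev ρ κ)
          = -(toInc (rev ρ H) * toInc (rev ρ κ) * (toInc (red κ) * toInc H)) := by
            rw [hh1, inc_mul_neg, mul_one, inc_neg_neg]
        _ = -(toInc (rev ρ H) * (toInc (rev ρ κ) * toInc (red κ)) * toInc H) := by
            simp only [mul_assoc]
        _ = toInc H := by rw [hr2, inc_neg_mul, one_mul, inc_neg_neg]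
    rw [← this, mul_assoc, hk1, mul_one]
  · rw [e2] at hr1
    have : toInc (rev ρ κ) * toInc (rev ρ H) = toInc H := by
      calc toInc (rev ρ κ) * toInc (rev ρ H)
          = -((toInc H * toInc (red κ)) * (toInc (rev ρ κ) * toInc (rev ρ H))) := by
            rw [hh2, inc_neg_mul, one_mul, inc_neg_neg]
        _ = -(toInc H * (toInc (red κ) * toInc (rev ρ κ) * toInc (rev ρ H))) := by
            simp only [mul_assoc]
        _ = toInc H := by rw [hr1, inc_mul_neg, mul_one, inc_neg_neg]
    rw [← this, ← mul_assoc, hk2, one_mul]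

/-- The constant term of `ℋ_{st}` is the coefficient of `x^{ρ_{st}}` in `κ_{st}`, since
`ℋ = x ℋ κ^rev - (x - 1) κ^rev`. -/
lemma chow_coeff_zero (hρ : IsWeakRank ρ) (hκ : IsKernel ρ κ) (hH : IsChow κ H) {s t : α}
    (hst : s ≤ t) : (H s t).coeff 0 = (κ s t).coeff (ρ s t) := by
  obtain ⟨hk1, hk2⟩ := toInc_kernel_inv hκ
  obtain ⟨hh1, hh2⟩ := toInc_chow_inv hH
  have e : toInc H = (X : ℤ[X]) • toInc (conv H (rev ρ κ)) - (X - 1 : ℤ[X]) • toInc (rev ρ κ) := by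
    calc toInc H = toInc H * toInc κ * toInc (rev ρ κ) := by rw [mul_assoc, hk2, mul_one]
      _ = _ := by
        rw [kernel_eq hρ hκ, mul_add, mul_smul_comm, mul_smul_comm, hh2, mul_one, add_mul,
          smul_mul_assoc, smul_mul_assoc, toInc_conv, inc_neg_mul, one_mul,
          inc_smul_neg, inc_sub_eq]
  have e' := congrArg (fun c : IncidenceAlgebra ℤ[X] α => (c s t).coeff 0) e
  simp only [IncidenceAlgebra.sub_apply, IncidenceAlgebra.constSMul_apply, toInc_apply _ hst,
    smul_eq_mul, coeff_sub, mul_coeff_zero, coeff_X_zero, zero_mul, coeff_one_zero,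
    rev_coeff_zero] at e'
  linarith

/-! ### The augmented Chow functions -/

lemma right_symm (hρ : IsWeakRank ρ) (hκ : IsKernel ρ κ) (hH : IsChow κ H)
    {f : α → α → ℤ[X]} (hf : IsRightKLS ρ κ f) {s t : α} (hst : s ≤ t) :
    PolySymm (ρ s t) (conv H (rev ρ f) s t) := by
  have hHd : ∀ ⦃s t : α⦄, s ≤ t → (H s t).natDegree ≤ ρ s t :=
    fun s t hst => natDegree_chow_le hρ hκ hH _ s t rfl hst
  have hfd : ∀ ⦃s t : α⦄, s ≤ t → (rev ρ f s t).natDegree ≤ ρ s t := fun s t hst => by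
    apply natDegree_rev_le
    rcases hst.eq_or_lt with rfl | h
    · simp [hf.diag]
    · have := hf.degLT h
      omega
  refine ⟨natDegree_conv_le hρ hHd hfd s t, ?_⟩
  refine apply_eq_of_toInc_eq (a := rev ρ (conv H (rev ρ f))) ?_ hst
  rw [toInc_rev_conv hρ hHd hfd, rev_rev, (rev_chow_eq hρ hκ hH).1, toInc_conv,
    toInc_congr hf.rev_eq, toInc_conv, mul_assoc]

lemma left_symm (hρ : IsWeakRank ρ) (hκ : IsKernel ρ κ) (hH : IsChow κ H)
    {g : α → α → ℤ[X]} (hg : IsLeftKLS ρ κ g) {s t : α} (hst : s ≤ t) :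
    PolySymm (ρ s t) (conv (rev ρ g) H s t) := by
  have hHd : ∀ ⦃s t : α⦄, s ≤ t → (H s t).natDegree ≤ ρ s t :=
    fun s t hst => natDegree_chow_le hρ hκ hH _ s t rfl hst
  have hgd : ∀ ⦃s t : α⦄, s ≤ t → (rev ρ g s t).natDegree ≤ ρ s t := fun s t hst => by
    apply natDegree_rev_le
    rcases hst.eq_or_lt with rfl | h
    · simp [hg.diag]
    · have := hg.degLT h
      omega
  refine ⟨natDegree_conv_le hρ hgd hHd s t, ?_⟩
  refine apply_eq_of_toInc_eq (a := rev ρ (conv (rev ρ g) H)) ?_ hst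
  rw [toInc_rev_conv hρ hgd hHd, rev_rev, (rev_chow_eq hρ hκ hH).2, toInc_conv,
    toInc_congr hg.rev_eq, toInc_conv, mul_assoc]

lemma right_coeff (hρ : IsWeakRank ρ) (hκ : IsKernel ρ κ) (hH : IsChow κ H)
    {f : α → α → ℤ[X]} (hf : IsRightKLS ρ κ f) {s t : α} (hst : s ≤ t) :
    (conv H (rev ρ f) s t).coeff (ρ s t) = (κ s t).coeff (ρ s t) := by
  rw [(right_symm hρ hκ hH hf hst).coeff_eq, ← chow_coeff_zero hρ hκ hH hst, conv,
    finsetSum_coeff, Finset.sum_eq_single_of_mem t (Finset.mem_Icc.2 ⟨hst, le_rfl⟩)]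
  · rw [mul_coeff_zero, rev_coeff_zero, hf.diag, hρ.self]
    simp
  · intro w hw hwt
    rw [Finset.mem_Icc] at hw
    rw [mul_coeff_zero, coeff_zero_rev_of_lt hf.degLT (lt_of_le_of_ne hw.2 hwt), mul_zero]

lemma left_coeff (hρ : IsWeakRank ρ) (hκ : IsKernel ρ κ) (hH : IsChow κ H)
    {g : α → α → ℤ[X]} (hg : IsLeftKLS ρ κ g) {s t : α} (hst : s ≤ t) :
    (conv (rev ρ g) H s t).coeff (ρ s t) = (κ s t).coeff (ρ s t) := by
  rw [(left_symm hρ hκ hH hg hst).coeff_eq, ← chow_coeff_zero hρ hκ hH hst, conv,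
    finsetSum_coeff, Finset.sum_eq_single_of_mem s (Finset.mem_Icc.2 ⟨le_rfl, hst⟩)]
  · rw [mul_coeff_zero, rev_coeff_zero, hg.diag, hρ.self]
    simp
  · intro w hw hws
    rw [Finset.mem_Icc] at hw
    rw [mul_coeff_zero, coeff_zero_rev_of_lt hg.degLT (lt_of_le_of_ne hw.1 (Ne.symm hws)),
      zero_mul]

end AugmentedChow

/-- Proposition 3.15: for the augmented Chow functions `F = ℋ·f^rev` and `G = g^rev·ℋ`:
(i) `[x^{ρ_{st}}] F_{st} = [x^{ρ_{st}}] G_{st} = [x^{ρ_{st}}] κ_{st}`, and if `κ` is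
non-degenerate then `deg F_{st} = deg G_{st} = ρ_{st}`; (ii) `F` and `G` are symmetric:
`F_{st}(x) = x^{ρ_{st}} F_{st}(1/x)` and `G_{st}(x) = x^{ρ_{st}} G_{st}(1/x)`. -/
theorem augmented_chow_degree_symmetry [PartialOrder α] [LocallyFiniteOrder α]
    (ρ : α → α → ℕ) (hρ : IsWeakRank ρ)
    (κ : α → α → Polynomial ℤ) (hκ : IsKernel ρ κ)
    (H : α → α → Polynomial ℤ) (hH : IsChow κ H)
    (f : α → α → Polynomial ℤ) (hf : IsRightKLS ρ κ f)
    (g : α → α → Polynomial ℤ) (hg : IsLeftKLS ρ κ g) :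
    (∀ s t : α, s ≤ t →
      (conv H (rev ρ f) s t).coeff (ρ s t) = (κ s t).coeff (ρ s t) ∧
      (conv (rev ρ g) H s t).coeff (ρ s t) = (κ s t).coeff (ρ s t)) ∧
    ((∀ s t : α, s ≤ t → (κ s t).natDegree = ρ s t) →
      ∀ s t : α, s ≤ t →
        (conv H (rev ρ f) s t).natDegree = ρ s t ∧
        (conv (rev ρ g) H s t).natDegree = ρ s t) ∧
    (∀ s t : α, s ≤ t →
      PolySymm (ρ s t) (conv H (rev ρ f) s t) ∧
      PolySymm (ρ s t) (conv (rev ρ g) H s t)) := by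
  refine ⟨fun s t hst => ⟨right_coeff hρ hκ hH hf hst, left_coeff hρ hκ hH hg hst⟩, ?_,
    fun s t hst => ⟨right_symm hρ hκ hH hf hst, left_symm hρ hκ hH hg hst⟩⟩
  intro hdeg s t hst
  have hne : (κ s t).coeff (ρ s t) ≠ 0 := by
    rcases hst.eq_or_lt with rfl | h
    · simp [hκ.diag, hρ.self]
    · rw [← hdeg s t hst]
      refine leadingCoeff_ne_zero.2 fun h0 => ?_
      -- `natDegree 0 = 0`, so the vanishing of `κ s t` would force `ρ s t = 0`.
      have h1 := hdeg s t hst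
      have h2 := hρ.pos h
      rw [h0, natDegree_zero] at h1
      omega
  constructor
  · refine natDegree_eq_of_le_of_coeff_ne_zero (right_symm hρ hκ hH hf hst).1 ?_
    rwa [right_coeff hρ hκ hH hf hst]
  · refine natDegree_eq_of_le_of_coeff_ne_zero (left_symm hρ hκ hH hg hst).1 ?_
    rwa [left_coeff hρ hκ hH hg hst]
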